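/- Let i denote the imaginary unit and define A = [[1,1],[−1/2,1/2]], B = [[0,1],[−1,0]], C = [[1,1],[−1/2,1/2]], D = [[0,1/2],[−2,0]], E = [[−2,2i],[i/4,−1/4]], F = [[(−1+i)/2,−1/2],[1−i,−i]], G = [[−i/2,−1/2],[1,i]], H = [[1,−i],[−i/2,1/2]], I = [[i,0],[0,−i]], J = [[1,−1],[1/2,1/2]]. Then the following four identities hold: (i) for the gate CNOT12 = |0000⟩+|1010⟩+|1101⟩+|0111⟩, (A⊗B⊗C⊗D)CNOT12 = |0000⟩ − (1/4)|1010⟩ + 4|0101⟩ + |1111⟩; (ii) for the gate CNOT1 = |0000⟩+|0110⟩+|1011⟩+|1101⟩, (G⊗H⊗I⊗J)CNOT1 = |0000⟩ + |1100⟩ − 2|1010⟩ + i|1001⟩ − (1/2)|0110⟩ − (i/4)|0101⟩ + (i/2)|0011⟩ − (i/2)|1111⟩; (iii) the change of basis of the bridge cogate ⟨100|+⟨010|+⟨001|+⟨111| under (D,E,G) (cogate rule, i.e. transform by D⁻¹,E⁻¹,G⁻¹) equals −(1/4)⟨100| + 8⟨010| − (1/2)⟨001| + ⟨111|; (iv)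 the change of basis of the bridge cogate ⟨000|+⟨010|+⟨101| under (C,F,H) equals ⟨100| + (i/4)⟨010| − i⟨001| + ⟨111|. Consequently all four tensors are simultaneously Pfaffian. -/

import Mathlib

/-!
A vector whose coordinate at the zero bitstring is nonzero determines the only skew-symmetric
matrix that can represent it as a multiple of a sub-Pfaffian vector: the matrix of its normalised
weight-two coordinates. In arity at most five the even subsets have size zero, two or four, so such
a vector is a multiple of a sub-Pfaffian vector as soon as it has even support and satisfies the
three-term Pfaffian relations on four-element subsets. In arity at most three there are no relations
at all, and complementing bitstrings turns this into a criterion for cogates.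

A change of basis is linear and sends a basis vector to a product vector, which gives the four
transformed tensors; all the matrices inverted for the cogates have determinant one.
-/

open scoped BigOperators

noncomputable section

/-- Change of basis on an `n`-arity gate: `((A₁⊗…⊗Aₙ)G)(b) = Σ_c (∏ᵢ Aᵢ(bᵢ,cᵢ))·G(c)`. -/
def cobGate {n : ℕ} (A : Fin n → Matrix (Fin 2) (Fin 2) ℂ) (G : (Fin n → Fin 2) → ℂ) :
    (Fin n → Fin 2) → ℂ :=
  fun b => ∑ c : Fin n → Fin 2, (∏ i, A i (b i) (c i)) * G c

/-- Change of basis on an `n`-arity cogate: `C′(b) = Σ_c C(c)·∏ᵢ Aᵢ⁻¹(cᵢ,bᵢ)`. -/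
def cobCogate {n : ℕ} (A : Fin n → Matrix (Fin 2) (Fin 2) ℂ) (C : (Fin n → Fin 2) → ℂ) :
    (Fin n → Fin 2) → ℂ :=
  fun b => ∑ c : Fin n → Fin 2, C c * ∏ i, (A i)⁻¹ (c i) (b i)

/-- The standard basis vector (ket/bra) at the bitstring `v`. -/
def ket {n : ℕ} (v : Fin n → Fin 2) : (Fin n → Fin 2) → ℂ :=
  fun b => if b = v then 1 else 0

/-- The support of a bitstring. -/
def supp {n : ℕ} (b : Fin n → Fin 2) : Finset (Fin n) :=
  Finset.univ.filter fun i => b i = 1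

/-- Fuel-driven Laplace expansion of the Pfaffian of a principal submatrix. -/
def subPfAux {n : ℕ} (Ξ : Matrix (Fin n) (Fin n) ℂ) : ℕ → Finset (Fin n) → ℂ
  | 0, I => if I = ∅ then 1 else 0
  | fuel + 1, I =>
    if hI : I.Nonempty then
      if Odd I.card then 0
      else
        ∑ i ∈ I.erase (I.min' hI),
          (-1 : ℂ) ^ (I.filter fun j => j ≤ i).card * Ξ (I.min' hI) i *
            subPfAux Ξ fuel ((I.erase (I.min' hI)).erase i)
    else 1

/-- `subPf Ξ I` is the Pfaffian `Pf(Ξ|_I)` of the principal submatrix of `Ξ` on the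
rows and columns in `I` (`1` on the empty set, `0` for odd `|I|`). -/
def subPf {n : ℕ} (Ξ : Matrix (Fin n) (Fin n) ℂ) (I : Finset (Fin n)) : ℂ :=
  subPfAux Ξ I.card I

/-- The sub-Pfaffian vector: coordinate `Pf(Ξ|_I)` at the bitstring with support `I`. -/
def sPf {n : ℕ} (Ξ : Matrix (Fin n) (Fin n) ℂ) : (Fin n → Fin 2) → ℂ :=
  fun b => subPf Ξ (supp b)

/-- The dual sub-Pfaffian vector: coordinate `Pf(Θ|_{Jᶜ})` at the bitstring with support `J`. -/
def sPfStar {n : ℕ} (Θ : Matrix (Fin n) (Fin n) ℂ) : (Fin n → Fin 2) → ℂ :=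
  fun b => subPf Θ (supp b)ᶜ

/-- A matrix is skew-symmetric. -/
def IsSkew {n : ℕ} (Ξ : Matrix (Fin n) (Fin n) ℂ) : Prop :=
  ∀ i j, Ξ j i = -Ξ i j

/-- A gate is Pfaffian under the change of basis `M`. -/
def IsPfaffGate {n : ℕ} (M : Fin n → Matrix (Fin 2) (Fin 2) ℂ) (G : (Fin n → Fin 2) → ℂ) : Prop :=
  ∃ (α : ℂ) (Ξ : Matrix (Fin n) (Fin n) ℂ), IsSkew Ξ ∧ cobGate M G = fun b => α * sPf Ξ b

/-- A cogate is Pfaffian under the change of basis `M`. -/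
def IsPfaffCogate {n : ℕ} (M : Fin n → Matrix (Fin 2) (Fin 2) ℂ) (C : (Fin n → Fin 2) → ℂ) : Prop :=
  ∃ (β : ℂ) (Θ : Matrix (Fin n) (Fin n) ℂ), IsSkew Θ ∧ cobCogate M C = fun b => β * sPfStar Θ b

/-- The 4-arity CNOT12 gate (the partial chain CNOT1–CNOT2). -/
def cnot12 : (Fin 4 → Fin 2) → ℂ :=
  ket ![0, 0, 0, 0] + ket ![1, 0, 1, 0] + ket ![1, 1, 0, 1] + ket ![0, 1, 1, 1]

/-- The 4-arity CNOT1 gate. -/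
def cnot1 : (Fin 4 → Fin 2) → ℂ :=
  ket ![0, 0, 0, 0] + ket ![0, 1, 1, 0] + ket ![1, 0, 1, 1] + ket ![1, 1, 0, 1]

/-- The bridge cogate `⟨100|+⟨010|+⟨001|+⟨111|`. -/
def bridgeT : (Fin 3 → Fin 2) → ℂ :=
  ket ![1, 0, 0] + ket ![0, 1, 0] + ket ![0, 0, 1] + ket ![1, 1, 1]

/-- The bridge cogate `⟨000|+⟨010|+⟨101|`. -/
def bridgeB : (Fin 3 → Fin 2) → ℂ :=
  ket ![0, 0, 0] + ket ![0, 1, 0] + ket ![1, 0, 1]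

def mA : Matrix (Fin 2) (Fin 2) ℂ := !![1, 1; -(1/2), 1/2]
def mB : Matrix (Fin 2) (Fin 2) ℂ := !![0, 1; -1, 0]
def mC : Matrix (Fin 2) (Fin 2) ℂ := !![1, 1; -(1/2), 1/2]
def mD : Matrix (Fin 2) (Fin 2) ℂ := !![0, 1/2; -2, 0]
def mE : Matrix (Fin 2) (Fin 2) ℂ := !![-2, 2*Complex.I; Complex.I/4, -(1/4)]
def mF : Matrix (Fin 2) (Fin 2) ℂ := !![(-1+Complex.I)/2, -(1/2); 1-Complex.I, -Complex.I]
def mG : Matrix (Fin 2) (Fin 2) ℂ := !![-Complex.I/2, -(1/2); 1, Complex.I]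
def mH : Matrix (Fin 2) (Fin 2) ℂ := !![1, -Complex.I; -Complex.I/2, 1/2]
def mI : Matrix (Fin 2) (Fin 2) ℂ := !![Complex.I, 0; 0, -Complex.I]
def mJ : Matrix (Fin 2) (Fin 2) ℂ := !![1, -1; 1/2, 1/2]

theorem inv_eq_adjugate_of_det_eq_one {ι R : Type*} [Fintype ι] [DecidableEq ι] [CommRing R]
    {A : Matrix ι ι R} (hA : A.det = 1) : A⁻¹ = A.adjugate := by
  rw [Matrix.inv_def, hA, Ring.inverse_one, one_smul]

section ChangeOfBasis

variable {n : ℕ}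

theorem cobGate_add (A : Fin n → Matrix (Fin 2) (Fin 2) ℂ) (G H : (Fin n → Fin 2) → ℂ) :
    cobGate A (G + H) = cobGate A G + cobGate A H := by
  funext b
  simp only [cobGate, Pi.add_apply, mul_add, Finset.sum_add_distrib]

theorem cobGate_ket (A : Fin n → Matrix (Fin 2) (Fin 2) ℂ) (v : Fin n → Fin 2) :
    cobGate A (ket v) = fun b => ∏ i, A i (b i) (v i) := by
  funext b
  simp [cobGate, ket]

theorem cobCogate_eq_cobGate_adjugate {A : Fin n → Matrix (Fin 2) (Fin 2) ℂ}
    (hA : ∀ i, (A i).det = 1) (C : (Fin n → Fin 2) → ℂ) :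
    cobCogate A C = cobGate (fun i => (A i).adjugate.transpose) C := by
  funext b
  simp only [cobCogate, cobGate, inv_eq_adjugate_of_det_eq_one (hA _), Matrix.transpose_apply,
    mul_comm]

theorem ket_apply_eq_zero {v b : Fin n → Fin 2} {p : (Fin n → Fin 2) → Prop} (hb : p b)
    (hv : ¬ p v) : ket v b = 0 := by
  refine if_neg ?_
  rintro rfl
  exact hv hb

end ChangeOfBasis

section SubPfaffian

variable {n : ℕ} (Ξ : Matrix (Fin n) (Fin n) ℂ)

theorem subPf_empty : subPf Ξ ∅ = 1 := by
  simp [subPf, subPfAux]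

theorem subPf_of_odd {I : Finset (Fin n)} (hI : Odd I.card) : subPf Ξ I = 0 := by
  obtain ⟨k, hk⟩ := Nat.exists_eq_succ_of_ne_zero hI.pos.ne'
  rw [subPf, hk, subPfAux, dif_pos (Finset.card_pos.mp hI.pos), if_pos hI]

theorem subPfAux_succ {k : ℕ} {I : Finset (Fin n)} (hI : I.card ≤ k) :
    subPfAux Ξ (k + 1) I = subPfAux Ξ k I := by
  induction k generalizing I with
  | zero =>
    obtain rfl := Finset.card_eq_zero.mp (Nat.le_zero.mp hI)
    simp [subPfAux]
  | succ k ih =>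
    rw [subPfAux, subPfAux]
    refine dite_congr rfl (fun hne => ?_) fun _ => rfl
    refine congrArg (ite _ 0) (Finset.sum_congr rfl fun i _ => ?_)
    have hmin : (I.erase (I.min' hne)).card ≤ k := by
      rw [Finset.card_erase_of_mem (I.min'_mem hne)]
      omega
    rw [ih ((Finset.card_erase_le).trans hmin)]

theorem subPfAux_eq_subPf {k : ℕ} {I : Finset (Fin n)} (hI : I.card ≤ k) :
    subPfAux Ξ k I = subPf Ξ I := by
  induction k, hI using Nat.le_induction with
  | base => rfl
  | succ k hk ih => rw [subPfAux_succ Ξ hk, ih]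

theorem subPf_insert {m : Fin n} {J : Finset (Fin n)} (hm : ∀ i ∈ J, m < i) :
    subPf Ξ (insert m J) =
      ∑ i ∈ J, (-1) ^ ((J.filter (· ≤ i)).card + 1) * Ξ m i * subPf Ξ (J.erase i) := by
  have hmJ : m ∉ J := fun h => lt_irrefl m (hm m h)
  have hcard : (insert m J).card = J.card + 1 := Finset.card_insert_of_notMem hmJ
  rcases Nat.even_or_odd J.card with heven | hodd
  · rw [subPf_of_odd Ξ (hcard ▸ heven.add_one)]
    refine (Finset.sum_eq_zero fun i hi => ?_).symm
    have herase : Odd (J.erase i).card := by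
      have := Finset.card_erase_add_one hi
      grind
    rw [subPf_of_odd Ξ herase, mul_zero]
  · have hne : (insert m J).Nonempty := Finset.insert_nonempty m J
    have hmin : (insert m J).min' hne = m :=
      le_antisymm (Finset.min'_le _ _ (Finset.mem_insert_self m J))
        (Finset.le_min' _ _ _ fun i hi => (Finset.mem_insert.mp hi).elim
          (fun h => h.ge) fun h => (hm i h).le)
    have hnotOdd : ¬ Odd (insert m J).card :=
      Nat.not_odd_iff_even.mpr (hcard ▸ hodd.add_one)
    rw [subPf, hcard, subPfAux, dif_pos hne, if_neg hnotOdd, hmin, Finset.erase_insert hmJ]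
    refine Finset.sum_congr rfl fun i hi => ?_
    have hfilter : ((insert m J).filter (· ≤ i)).card = (J.filter (· ≤ i)).card + 1 := by
      rw [Finset.filter_insert, if_pos (hm i hi).le,
        Finset.card_insert_of_notMem fun h => hmJ (Finset.mem_of_mem_filter m h)]
    rw [hfilter, subPfAux_eq_subPf Ξ Finset.card_erase_le]

theorem subPf_pair {i j : Fin n} (hij : i < j) : subPf Ξ {i, j} = Ξ i j := by
  rw [subPf_insert Ξ (by simpa using hij)]
  simp [Finset.filter_singleton, subPf_empty]

theorem subPf_quadruple {i j k l : Fin n} (hij : i < j) (hjk : j < k) (hkl : k < l) :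
    subPf Ξ {i, j, k, l} = Ξ i j * Ξ k l - Ξ i k * Ξ j l + Ξ i l * Ξ j k := by
  have hjl : j < l := hjk.trans hkl
  have hmin : ∀ m ∈ ({j, k, l} : Finset (Fin n)), i < m := by
    simp [hij, hij.trans hjk, hij.trans hjl]
  have hj : j ∉ ({k, l} : Finset (Fin n)) := by
    simp [hjk.ne, hjl.ne]
  have herase_j : ({j, k, l} : Finset (Fin n)).erase j = {k, l} := by
    grind
  have herase_k : ({j, k, l} : Finset (Fin n)).erase k = {j, l} := by
    grind
  have herase_l : ({j, k, l} : Finset (Fin n)).erase l = {j, k} := by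
    grind
  have hfilter_j : ({j, k, l} : Finset (Fin n)).filter (· ≤ j) = {j} := by
    grind
  have hfilter_k : ({j, k, l} : Finset (Fin n)).filter (· ≤ k) = {j, k} := by
    grind
  have hfilter_l : ({j, k, l} : Finset (Fin n)).filter (· ≤ l) = {j, k, l} := by
    grind
  rw [subPf_insert Ξ hmin, Finset.sum_insert hj,
    Finset.sum_pair hkl.ne, herase_j, herase_k, herase_l, subPf_pair Ξ hjk, subPf_pair Ξ hkl,
    subPf_pair Ξ hjl, hfilter_j, hfilter_k, hfilter_l, Finset.card_insert_of_notMem hj,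
    Finset.card_pair hjk.ne, Finset.card_pair hkl.ne, Finset.card_singleton]
  ring

end SubPfaffian

section Bitstring

variable {n : ℕ}

/-- The bitstring with support `I`, inverse to `supp`. -/
def bitstring (I : Finset (Fin n)) : Fin n → Fin 2 :=
  fun i => if i ∈ I then 1 else 0

theorem bitstring_empty : bitstring (∅ : Finset (Fin n)) = 0 := by
  funext i
  simp [bitstring]

theorem bitstring_supp (b : Fin n → Fin 2) : bitstring (supp b) = b := by
  funext i
  simp only [bitstring, supp, Finset.mem_filter_univ]
  split_ifs <;> omega

theorem supp_rev_comp (b : Fin n → Fin 2) : supp (Fin.rev ∘ b) = (supp b)ᶜ := by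
  ext i
  simp only [supp, Function.comp_apply, Finset.mem_filter_univ, Finset.mem_compl]
  generalize b i = x
  decide +revert

theorem sPf_rev_comp (Θ : Matrix (Fin n) (Fin n) ℂ) (b : Fin n → Fin 2) :
    sPf Θ (Fin.rev ∘ b) = sPfStar Θ b := by
  rw [sPf, sPfStar, supp_rev_comp]

end Bitstring

section PfaffianRelations

variable {n : ℕ}

/-- The skew-symmetric matrix of the weight-two coordinates of `V`, normalised by the coordinate at
the zero bitstring (the zero matrix if that coordinate vanishes, since then `x / V 0 = 0`). -/
def pairMatrix (V : (Fin n → Fin 2) → ℂ) : Matrix (Fin n) (Fin n) ℂ := fun i j =>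
  if i < j then V (bitstring {i, j}) / V 0
  else if j < i then -(V (bitstring {j, i}) / V 0)
  else 0

theorem isSkew_pairMatrix (V : (Fin n → Fin 2) → ℂ) : IsSkew (pairMatrix V) := by
  intro i j
  rcases lt_trichotomy i j with h | rfl | h
  · simp [pairMatrix, h, h.not_gt]
  · simp [pairMatrix]
  · simp [pairMatrix, h, h.not_gt]

/-- The matchgate identities for the weight-four coordinates of `V`: the formula for a Pfaffian of
size four in terms of the weight-two coordinates, made homogeneous by the coordinate at the zero
bitstring. -/
def PfaffianRelations (V : (Fin n → Fin 2) → ℂ) : Prop :=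
  ∀ ⦃i j k l : Fin n⦄, i < j → j < k → k < l →
    V 0 * V (bitstring {i, j, k, l}) =
      V (bitstring {i, j}) * V (bitstring {k, l}) - V (bitstring {i, k}) * V (bitstring {j, l})
        + V (bitstring {i, l}) * V (bitstring {j, k})

theorem pfaffianRelations_of_le_three (hn : n ≤ 3) (V : (Fin n → Fin 2) → ℂ) :
    PfaffianRelations V := by
  intro i j k l hij hjk hkl
  omega

theorem pfaffianRelations_four {V : (Fin 4 → Fin 2) → ℂ}
    (h : V ![0, 0, 0, 0] * V ![1, 1, 1, 1] = V ![1, 1, 0, 0] * V ![0, 0, 1, 1]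
      - V ![1, 0, 1, 0] * V ![0, 1, 0, 1] + V ![1, 0, 0, 1] * V ![0, 1, 1, 0]) :
    PfaffianRelations V := by
  intro i j k l hij hjk hkl
  obtain ⟨rfl, rfl, rfl, rfl⟩ : i = 0 ∧ j = 1 ∧ k = 2 ∧ l = 3 := by omega
  convert h using 5 <;> decide

theorem exists_eq_pair_of_card_eq_two {I : Finset (Fin n)} (hI : I.card = 2) :
    ∃ i j, i < j ∧ I = {i, j} := by
  let e := I.orderEmbOfFin hI
  refine ⟨e 0, e 1, e.strictMono (by decide), ?_⟩
  rw [← I.image_orderEmbOfFin_univ hI]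
  simp [Fin.univ_succ, e]

theorem exists_eq_quadruple_of_card_eq_four {I : Finset (Fin n)} (hI : I.card = 4) :
    ∃ i j k l, i < j ∧ j < k ∧ k < l ∧ I = {i, j, k, l} := by
  let e := I.orderEmbOfFin hI
  refine ⟨e 0, e 1, e 2, e 3, e.strictMono (by decide), e.strictMono (by decide),
    e.strictMono (by decide), ?_⟩
  rw [← I.image_orderEmbOfFin_univ hI]
  simp [Fin.univ_succ, e]

theorem eq_mul_sPf_pairMatrix (hn : n ≤ 5) {V : (Fin n → Fin 2) → ℂ} (h0 : V 0 ≠ 0)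
    (hodd : ∀ b, Odd (supp b).card → V b = 0) (hV : PfaffianRelations V) :
    V = fun b => V 0 * sPf (pairMatrix V) b := by
  have hpair : ∀ {i j : Fin n}, i < j → V 0 * pairMatrix V i j = V (bitstring {i, j}) :=
    fun hij => by rw [pairMatrix, if_pos hij, mul_div_cancel₀ _ h0]
  funext b
  have hb : V b = V (bitstring (supp b)) := by rw [bitstring_supp]
  rw [hb, sPf]
  rcases Nat.even_or_odd (supp b).card with heven | hb_odd
  · have hle : (supp b).card ≤ 5 := (card_finset_fin_le _).trans hn
    have hcard : (supp b).card = 0 ∨ (supp b).card = 2 ∨ (supp b).card = 4 := by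
      grind
    rcases hcard with hcard | hcard | hcard
    · rw [Finset.card_eq_zero.mp hcard, subPf_empty, bitstring_empty, mul_one]
    · obtain ⟨i, j, hij, hI⟩ := exists_eq_pair_of_card_eq_two hcard
      rw [hI, subPf_pair _ hij, hpair hij]
    · obtain ⟨i, j, k, l, hij, hjk, hkl, hI⟩ := exists_eq_quadruple_of_card_eq_four hcard
      rw [hI, subPf_quadruple _ hij hjk hkl]
      refine mul_left_cancel₀ h0 ?_
      rw [hV hij hjk hkl, ← hpair hij, ← hpair hkl, ← hpair (hij.trans hjk),
        ← hpair (hjk.trans hkl), ← hpair ((hij.trans hjk).trans hkl), ← hpair hjk]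
      ring
  · rw [← hb, hodd b hb_odd, subPf_of_odd _ hb_odd, mul_zero]

theorem isPfaffGate_of_pfaffianRelations (hn : n ≤ 5) {M : Fin n → Matrix (Fin 2) (Fin 2) ℂ}
    {G : (Fin n → Fin 2) → ℂ} (h0 : cobGate M G 0 ≠ 0)
    (hodd : ∀ b, Odd (supp b).card → cobGate M G b = 0) (hG : PfaffianRelations (cobGate M G)) :
    IsPfaffGate M G :=
  ⟨_, _, isSkew_pairMatrix _, eq_mul_sPf_pairMatrix hn h0 hodd hG⟩

theorem isPfaffCogate_of_le_three (hn : n ≤ 3) {M : Fin n → Matrix (Fin 2) (Fin 2) ℂ}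
    {C : (Fin n → Fin 2) → ℂ} (h1 : cobCogate M C 1 ≠ 0)
    (hodd : ∀ b, Odd (supp b)ᶜ.card → cobCogate M C b = 0) : IsPfaffCogate M C := by
  let V : (Fin n → Fin 2) → ℂ := fun b => cobCogate M C (Fin.rev ∘ b)
  have hV : V = fun b => V 0 * sPf (pairMatrix V) b :=
    eq_mul_sPf_pairMatrix (by omega) h1
      (fun b hb => hodd _ (by rwa [supp_rev_comp, compl_compl]))
      (pfaffianRelations_of_le_three hn V)
  refine ⟨V 0, pairMatrix V, isSkew_pairMatrix V, funext fun b => ?_⟩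
  have hrev : Fin.rev ∘ Fin.rev ∘ b = b := by
    funext i
    simp
  calc cobCogate M C b = V (Fin.rev ∘ b) := by simp only [V, hrev]
    _ = V 0 * sPf (pairMatrix V) (Fin.rev ∘ b) := congrFun hV _
    _ = V 0 * sPfStar (pairMatrix V) b := by rw [sPf_rev_comp]

end PfaffianRelations

section Gates

theorem cobGate_cnot12 :
    cobGate ![mA, mB, mC, mD] cnot12 =
      fun b => ket ![0, 0, 0, 0] b - (1 / 4 : ℂ) * ket ![1, 0, 1, 0] b
        + 4 * ket ![0, 1, 0, 1] b + ket ![1, 1, 1, 1] b := by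
  simp only [cnot12, cobGate_add, cobGate_ket]
  refine funext ((FinVec.forall_iff _).mp fun x y z w => ?_)
  fin_cases x <;> fin_cases y <;> fin_cases z <;> fin_cases w <;>
    simp [Fin.prod_univ_four, mA, mB, mC, mD, ket] <;> norm_num

theorem cobGate_cnot1 :
    cobGate ![mG, mH, mI, mJ] cnot1 =
      fun b => ket ![0, 0, 0, 0] b + ket ![1, 1, 0, 0] b - 2 * ket ![1, 0, 1, 0] b
        + Complex.I * ket ![1, 0, 0, 1] b - (1 / 2 : ℂ) * ket ![0, 1, 1, 0] b
        - (Complex.I / 4) * ket ![0, 1, 0, 1] b + (Complex.I / 2) * ket ![0, 0, 1, 1] b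
        - (Complex.I / 2) * ket ![1, 1, 1, 1] b := by
  simp only [cnot1, cobGate_add, cobGate_ket]
  refine funext ((FinVec.forall_iff _).mp fun x y z w => ?_)
  fin_cases x <;> fin_cases y <;> fin_cases z <;> fin_cases w <;>
    simp [Fin.prod_univ_four, mG, mH, mI, mJ, ket] <;> grind [Complex.I_mul_I]

theorem isPfaffGate_cnot12 : IsPfaffGate ![mA, mB, mC, mD] cnot12 := by
  refine isPfaffGate_of_pfaffianRelations (by norm_num) ?_ (fun b hb => ?_)
    (pfaffianRelations_four ?_) <;> rw [cobGate_cnot12]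
  · simp +decide [ket]
  · simp (disch := decide) [ket_apply_eq_zero (p := fun b => Odd (supp b).card) hb]
  · simp [ket]

theorem isPfaffGate_cnot1 : IsPfaffGate ![mG, mH, mI, mJ] cnot1 := by
  refine isPfaffGate_of_pfaffianRelations (by norm_num) ?_ (fun b hb => ?_)
    (pfaffianRelations_four ?_) <;> rw [cobGate_cnot1]
  · simp +decide [ket]
  · simp (disch := decide) [ket_apply_eq_zero (p := fun b => Odd (supp b).card) hb]
  · simp only [ket, Matrix.vecCons_inj, zero_ne_one, one_ne_zero, and_true, and_false, and_self,
      ↓reduceIte]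
    ring

end Gates

section Cogates

theorem det_mC : mC.det = 1 := by
  norm_num [mC, Matrix.det_fin_two_of]

theorem det_mD : mD.det = 1 := by
  norm_num [mD, Matrix.det_fin_two_of]

theorem det_mE : mE.det = 1 := by
  rw [mE, Matrix.det_fin_two_of]
  linear_combination (-1 / 2) * Complex.I_mul_I

theorem det_mF : mF.det = 1 := by
  rw [mF, Matrix.det_fin_two_of]
  linear_combination (-1 / 2) * Complex.I_mul_I

theorem det_mG : mG.det = 1 := by
  rw [mG, Matrix.det_fin_two_of]
  linear_combination (-1 / 2) * Complex.I_mul_I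

theorem det_mH : mH.det = 1 := by
  rw [mH, Matrix.det_fin_two_of]
  linear_combination (-1 / 2) * Complex.I_mul_I

theorem cobCogate_bridgeT :
    cobCogate ![mD, mE, mG] bridgeT =
      fun b => -(1 / 4 : ℂ) * ket ![1, 0, 0] b + 8 * ket ![0, 1, 0] b
        - (1 / 2 : ℂ) * ket ![0, 0, 1] b + ket ![1, 1, 1] b := by
  have hdet : ∀ i, (![mD, mE, mG] i).det = 1 := by
    simp [Fin.forall_fin_succ, det_mD, det_mE, det_mG]
  simp only [cobCogate_eq_cobGate_adjugate hdet, bridgeT, cobGate_add, cobGate_ket]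
  refine funext ((FinVec.forall_iff _).mp fun x y z => ?_)
  fin_cases x <;> fin_cases y <;> fin_cases z <;>
    simp [Fin.prod_univ_three, Matrix.adjugate_fin_two, mD, mE, mG, ket] <;>
    grind [Complex.I_mul_I]

theorem cobCogate_bridgeB :
    cobCogate ![mC, mF, mH] bridgeB =
      fun b => ket ![1, 0, 0] b + (Complex.I / 4) * ket ![0, 1, 0] b
        - Complex.I * ket ![0, 0, 1] b + ket ![1, 1, 1] b := by
  have hdet : ∀ i, (![mC, mF, mH] i).det = 1 := by
    simp [Fin.forall_fin_succ, det_mC, det_mF, det_mH]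
  simp only [cobCogate_eq_cobGate_adjugate hdet, bridgeB, cobGate_add, cobGate_ket]
  refine funext ((FinVec.forall_iff _).mp fun x y z => ?_)
  fin_cases x <;> fin_cases y <;> fin_cases z <;>
    simp [Fin.prod_univ_three, Matrix.adjugate_fin_two, mC, mF, mH, ket] <;>
    grind [Complex.I_mul_I]

theorem isPfaffCogate_bridgeT : IsPfaffCogate ![mD, mE, mG] bridgeT := by
  refine isPfaffCogate_of_le_three le_rfl ?_ fun b hb => ?_ <;> rw [cobCogate_bridgeT]
  · simp +decide [ket]
  · simp (disch := decide) [ket_apply_eq_zero (p := fun b => Odd (supp b)ᶜ.card) hb]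

theorem isPfaffCogate_bridgeB : IsPfaffCogate ![mC, mF, mH] bridgeB := by
  refine isPfaffCogate_of_le_three le_rfl ?_ fun b hb => ?_ <;> rw [cobCogate_bridgeB]
  · simp +decide [ket]
  · simp (disch := decide) [ket_apply_eq_zero (p := fun b => Odd (supp b)ᶜ.card) hb]

end Cogates

/-- Theorem 5.7: a Pfaffian partial SWAP, CNOT12–CNOT1 linked by bridge
cogates, with its four Pfaffian certificates. -/
theorem stmt17 :
    -- (i)
    (cobGate ![mA, mB, mC, mD] cnot12 =
      fun b => ket ![0,0,0,0] b - (1/4 : ℂ) * ket ![1,0,1,0] b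
        + 4 * ket ![0,1,0,1] b + ket ![1,1,1,1] b) ∧
    -- (ii)
    (cobGate ![mG, mH, mI, mJ] cnot1 =
      fun b => ket ![0,0,0,0] b + ket ![1,1,0,0] b - 2 * ket ![1,0,1,0] b
        + Complex.I * ket ![1,0,0,1] b - (1/2 : ℂ) * ket ![0,1,1,0] b
        - (Complex.I/4) * ket ![0,1,0,1] b + (Complex.I/2) * ket ![0,0,1,1] b
        - (Complex.I/2) * ket ![1,1,1,1] b) ∧
    -- (iii)
    (cobCogate ![mD, mE, mG] bridgeT =
      fun b => -(1/4 : ℂ) * ket ![1,0,0] b + 8 * ket ![0,1,0] b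
        - (1/2 : ℂ) * ket ![0,0,1] b + ket ![1,1,1] b) ∧
    -- (iv)
    (cobCogate ![mC, mF, mH] bridgeB =
      fun b => ket ![1,0,0] b + (Complex.I/4) * ket ![0,1,0] b
        - Complex.I * ket ![0,0,1] b + ket ![1,1,1] b) ∧
    -- consequently all four tensors are simultaneously Pfaffian
    IsPfaffGate ![mA, mB, mC, mD] cnot12 ∧
    IsPfaffGate ![mG, mH, mI, mJ] cnot1 ∧
    IsPfaffCogate ![mD, mE, mG] bridgeT ∧
    IsPfaffCogate ![mC, mF, mH] bridgeB := by
  exact ⟨cobGate_cnot12, cobGate_cnot1, cobCogate_bridgeT, cobCogate_bridgeB, isPfaffGate_cnot12,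
    isPfaffGate_cnot1, isPfaffCogate_bridgeT, isPfaffCogate_bridgeB⟩
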